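/- arXiv:1703.03237 — 5 statements merged into one kernel-verified Lean document; each statement's English description precedes it below -/
import Mathlib

section
/- Let M be an N×N row-stochastic real matrix (all entries nonnegative and each row sums to 1), let Φ = diag(φ₁,…,φ_N) be a diagonal matrix with 0 ≤ φᵢ < 1 for every i, and let v ∈ ℝ^N be a vector with nonnegative entries summing to 1. Then the matrix I − MᵀΦ is invertible, and ⟨𝟙, (I − Φ)(I − MᵀΦ)⁻¹ v⟩ = 1, where 𝟙 is the all-ones vector. (This is the normalization ⟨Σ|G(k=0,s)⟩ = 1/s of the propagator of the compound process with internal states.) -/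
open Matrix BigOperators

/-- For a row-stochastic matrix `M`, a diagonal matrix `Φ = diagonal φ` with entries in `[0,1)`,
and a probability vector `v`, the matrix `I - Mᵀ Φ` is invertible and
`⟨𝟙, (I - Φ)(I - Mᵀ Φ)⁻¹ v⟩ = 1`. -/
theorem stmt0 (N : ℕ) (M : Matrix (Fin N) (Fin N) ℝ) (φ : Fin N → ℝ) (v : Fin N → ℝ)
    (hM0 : ∀ i j, 0 ≤ M i j) (hM1 : ∀ i, ∑ j, M i j = 1)
    (hφ0 : ∀ i, 0 ≤ φ i) (hφ1 : ∀ i, φ i < 1)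
    (hv0 : ∀ i, 0 ≤ v i) (hv1 : ∑ i, v i = 1) :
    IsUnit (1 - Mᵀ * Matrix.diagonal φ) ∧
      (fun _ => (1 : ℝ)) ⬝ᵥ (((1 - Matrix.diagonal φ) * (1 - Mᵀ * Matrix.diagonal φ)⁻¹) *ᵥ v)
        = 1 := by
  have hU : IsUnit (1 - Mᵀ * Matrix.diagonal φ) := by
    rw [Matrix.isUnit_iff_isUnit_det, isUnit_iff_ne_zero]
    apply det_ne_zero_of_sum_col_lt_diag
    intro k
    have h1 : ∑ i ∈ Finset.univ.erase k, ‖(1 - Mᵀ * Matrix.diagonal φ) i k‖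
        = (∑ i ∈ Finset.univ.erase k, M k i) * φ k := by
      rw [Finset.sum_mul]
      apply Finset.sum_congr rfl
      intro i hi
      have hik : i ≠ k := Finset.ne_of_mem_erase hi
      rw [Matrix.sub_apply, Matrix.one_apply_ne hik, Matrix.mul_diagonal, Matrix.transpose_apply,
        zero_sub, norm_neg, Real.norm_eq_abs, abs_of_nonneg (mul_nonneg (hM0 k i) (hφ0 k))]
    have h2 : M k k + ∑ i ∈ Finset.univ.erase k, M k i = 1 := by
      rw [Finset.add_sum_erase _ _ (Finset.mem_univ k), hM1]
    rw [h1, Matrix.sub_apply, Matrix.one_apply_eq, Matrix.mul_diagonal, Matrix.transpose_apply,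
      Real.norm_eq_abs]
    refine lt_of_lt_of_le ?_ (le_abs_self _)
    have h3 : ∑ i ∈ Finset.univ.erase k, M k i = 1 - M k k := by linarith
    rw [h3]
    nlinarith [hφ1 k]
  refine ⟨hU, ?_⟩
  have key : (fun _ => (1 : ℝ)) ᵥ* (1 - Matrix.diagonal φ)
      = (fun _ => (1 : ℝ)) ᵥ* (1 - Mᵀ * Matrix.diagonal φ) := by
    have hM : (fun _ => (1 : ℝ)) ᵥ* Mᵀ = fun _ => (1 : ℝ) := by
      ext i
      simp [Matrix.vecMul, dotProduct, hM1]
    rw [Matrix.vecMul_sub, Matrix.vecMul_sub, ← Matrix.vecMul_vecMul, hM]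
  rw [Matrix.dotProduct_mulVec, ← Matrix.vecMul_vecMul, key, Matrix.vecMul_vecMul,
    Matrix.mul_nonsing_inv _ ((Matrix.isUnit_iff_isUnit_det _).1 hU), Matrix.vecMul_one]
  simp [dotProduct, hv1]
end

section
/- Every N×N row-stochastic real matrix M admits a stationary distribution: there exists a vector v ∈ ℝ^N with vᵢ ≥ 0 for all i, ∑ᵢ vᵢ = 1, and Mᵀ v = v. -/
open Matrix BigOperators

/-- Every row-stochastic matrix admits a stationary distribution: a probability vector `v`
with `Mᵀ v = v`. -/
theorem stmt1 (N : ℕ) (hN : 0 < N) (M : Matrix (Fin N) (Fin N) ℝ)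
    (hM0 : ∀ i j, 0 ≤ M i j) (hM1 : ∀ i, ∑ j, M i j = 1) :
    ∃ v : Fin N → ℝ, (∀ i, 0 ≤ v i) ∧ (∑ i, v i = 1) ∧ Mᵀ *ᵥ v = v := by
  have hdet : (M - 1).det = 0 := by
    rw [← Matrix.exists_mulVec_eq_zero_iff]
    refine ⟨fun _ => 1, ?_, ?_⟩
    · intro h
      have := congrFun h ⟨0, hN⟩
      simp at this
    · rw [Matrix.sub_mulVec, Matrix.one_mulVec]
      ext i
      simp [Matrix.mulVec, dotProduct, hM1]
  obtain ⟨w, hw0, hw⟩ := Matrix.exists_vecMul_eq_zero_iff.mpr hdet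
  rw [Matrix.vecMul_sub, Matrix.vecMul_one, sub_eq_zero] at hw
  have hwj : ∀ j, ∑ i, w i * M i j = w j := fun j => congrFun hw j
  have hle : ∀ j ∈ Finset.univ, |w j| ≤ ∑ i, |w i| * M i j := by
    intro j _
    rw [← hwj j]
    refine (Finset.abs_sum_le_sum_abs _ _).trans (le_of_eq ?_)
    refine Finset.sum_congr rfl fun i _ => ?_
    rw [abs_mul, abs_of_nonneg (hM0 i j)]
  have hsum : ∑ j, |w j| = ∑ j, ∑ i, |w i| * M i j := by
    rw [Finset.sum_comm]
    simp [← Finset.mul_sum, hM1]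
  have heq := (Finset.sum_eq_sum_iff_of_le hle).mp hsum
  have hpos : 0 < ∑ j, |w j| := by
    obtain ⟨k, hk⟩ := Function.ne_iff.mp hw0
    exact Finset.sum_pos' (fun i _ => abs_nonneg _) ⟨k, Finset.mem_univ _, abs_pos.mpr hk⟩
  refine ⟨fun j => |w j| / ∑ i, |w i|, fun i => by positivity, ?_, ?_⟩
  · rw [← Finset.sum_div, div_self hpos.ne']
  · ext j
    simp only [Matrix.mulVec, dotProduct, Matrix.transpose_apply]
    rw [heq j (Finset.mem_univ _), Finset.sum_div]
    refine Finset.sum_congr rfl fun i _ => ?_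
    ring
end

section
/- Let M be an N×N row-stochastic real matrix that is irreducible, i.e. for every pair of indices (i,j) there exists a positive integer k with (M^k)ᵢⱼ > 0. Then the eigenspace {v ∈ ℝ^N : Mᵀ v = v} is one-dimensional; consequently the stationary probability vector of M is unique. -/
open Matrix BigOperators

lemma pow_mem_aux (N : ℕ) (M : Matrix (Fin N) (Fin N) ℝ)
    (hM0 : ∀ i j, 0 ≤ M i j) (hM1 : ∀ i, ∑ j, M i j = 1) (k : ℕ) :
    M ^ k ∈ rowStochastic ℝ (Fin N) :=
  pow_mem (mem_rowStochastic_iff_sum.2 ⟨hM0, hM1⟩) k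

lemma harmonic_const (N : ℕ) (M : Matrix (Fin N) (Fin N) ℝ)
    (hM0 : ∀ i j, 0 ≤ M i j) (hM1 : ∀ i, ∑ j, M i j = 1)
    (hirr : ∀ i j, ∃ k : ℕ, 1 ≤ k ∧ 0 < (M ^ k) i j)
    (v : Fin N → ℝ) (hv : M *ᵥ v = v) (i : Fin N) (hi : ∀ j, v j ≤ v i) (j : Fin N) :
    v j = v i := by
  obtain ⟨k, -, hk⟩ := hirr i j
  have hS := pow_mem_aux N M hM0 hM1 k
  have hkv : ∀ k : ℕ, (M ^ k) *ᵥ v = v := by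
    intro k
    induction k with
    | zero => simp
    | succ n ih => rw [pow_succ, ← Matrix.mulVec_mulVec, hv, ih]
  have h1 : ∑ l, (M ^ k) i l * v l = v i := congrFun (hkv k) i
  have h2 : ∑ l, (M ^ k) i l = 1 := sum_row_of_mem_rowStochastic hS i
  have h3 : ∑ l, (M ^ k) i l * (v i - v l) = 0 := by
    simp only [mul_sub, Finset.sum_sub_distrib, ← Finset.sum_mul, h1, h2]
    ring
  have h4 := (Finset.sum_eq_zero_iff_of_nonneg (fun l _ =>
    mul_nonneg (nonneg_of_mem_rowStochastic hS) (sub_nonneg.2 (hi l)))).1 h3 j (Finset.mem_univ j)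
  rcases mul_eq_zero.1 h4 with h | h
  · exact absurd h hk.ne'
  · linarith

lemma finrank_ker_transpose_aux (N : ℕ) (A : Matrix (Fin N) (Fin N) ℝ) :
    Module.finrank ℝ (LinearMap.ker (Matrix.toLin' Aᵀ)) =
      Module.finrank ℝ (LinearMap.ker (Matrix.toLin' A)) := by
  have h1 := LinearMap.finrank_range_add_finrank_ker (Matrix.toLin' Aᵀ)
  have h2 := LinearMap.finrank_range_add_finrank_ker (Matrix.toLin' A)
  have h3 : Module.finrank ℝ (LinearMap.range (Matrix.toLin' Aᵀ)) =
      Module.finrank ℝ (LinearMap.range (Matrix.toLin' A)) := Matrix.rank_transpose A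
  omega

/-- For an irreducible row-stochastic matrix `M`, the fixed space `{v : Mᵀ v = v}` is
one-dimensional, and consequently the stationary probability vector is unique. -/
theorem stmt3 (N : ℕ) (hN : 0 < N) (M : Matrix (Fin N) (Fin N) ℝ)
    (hM0 : ∀ i j, 0 ≤ M i j) (hM1 : ∀ i, ∑ j, M i j = 1)
    (hirr : ∀ i j, ∃ k : ℕ, 1 ≤ k ∧ 0 < (M ^ k) i j) :
    Module.finrank ℝ (LinearMap.ker (Matrix.toLin' (Mᵀ - 1))) = 1 ∧
      ∀ v w : Fin N → ℝ,
        (∀ i, 0 ≤ v i) → (∑ i, v i = 1) → Mᵀ *ᵥ v = v →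
        (∀ i, 0 ≤ w i) → (∑ i, w i = 1) → Mᵀ *ᵥ w = w → v = w := by
  have hne : Nonempty (Fin N) := ⟨⟨0, hN⟩⟩
  have hmem : ∀ (A : Matrix (Fin N) (Fin N) ℝ) (v : Fin N → ℝ),
      v ∈ LinearMap.ker (Matrix.toLin' (A - 1)) ↔ A *ᵥ v = v := by
    intro A v
    rw [LinearMap.mem_ker, Matrix.toLin'_apply, Matrix.sub_mulVec, Matrix.one_mulVec, sub_eq_zero]
  have hfin : Module.finrank ℝ (LinearMap.ker (Matrix.toLin' (Mᵀ - 1))) = 1 := by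
    have ht : Mᵀ - 1 = (M - 1)ᵀ := by simp
    rw [ht, finrank_ker_transpose_aux]
    have h1 : (1 : Fin N → ℝ) ∈ LinearMap.ker (Matrix.toLin' (M - 1)) := by
      rw [hmem]
      exact one_vecMul_of_mem_rowStochastic (mem_rowStochastic_iff_sum.2 ⟨hM0, hM1⟩)
    refine finrank_eq_one (⟨1, h1⟩ : LinearMap.ker (Matrix.toLin' (M - 1))) ?_ ?_
    · intro h
      have := congrFun (congrArg Subtype.val h) ⟨0, hN⟩
      simp at this
    · rintro ⟨v, hv⟩
      obtain ⟨i, hi⟩ := Finite.exists_max v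
      refine ⟨v i, Subtype.ext (funext fun j => ?_)⟩
      have := harmonic_const N M hM0 hM1 hirr v ((hmem M v).1 hv) i hi j
      simp [this]
  refine ⟨hfin, ?_⟩
  intro v w _ hv1 hv _ hw1 hw
  obtain ⟨u, -, hu⟩ := finrank_eq_one_iff'.1 hfin
  obtain ⟨a, ha⟩ := hu ⟨v, (hmem _ v).2 hv⟩
  obtain ⟨b, hb⟩ := hu ⟨w, (hmem _ w).2 hw⟩
  have ha' : a • (u : Fin N → ℝ) = v := congrArg Subtype.val ha
  have hb' : b • (u : Fin N → ℝ) = w := congrArg Subtype.val hb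
  have e1 : a * ∑ i, (u : Fin N → ℝ) i = 1 := by
    rw [← hv1, ← ha', Finset.mul_sum]; rfl
  have e2 : b * ∑ i, (u : Fin N → ℝ) i = 1 := by
    rw [← hw1, ← hb', Finset.mul_sum]; rfl
  have hs : ∑ i, (u : Fin N → ℝ) i ≠ 0 := by
    intro h
    rw [h] at e1
    simp at e1
  have hab : a = b := mul_right_cancel₀ hs (e1.trans e2.symm)
  rw [← ha', ← hb', hab]
end

section
/- Let 0 < α₂ < α₁ < 1, B > 0, and for s > 0 define a₀(s) = −2 + s^{α₁} + s^{α₂} and b₀(s) = √(4 + s^{2α₁} + s^{2α₂} − 2s^{α₁+α₂}). Then, as s → 0⁺, the Laplace transform of the first-passage-time density satisfies 1 − exp(−B·√((a₀(s)+b₀(s))/2)) ~ (B/√2)·s^{α₂/2}; equivalently, exp(−B·√((a₀+b₀)/2)) = 1 − (B/√2)·s^{α₂/2} + o(s^{α₂/2}) as s → 0⁺. (This is the Laplace-domain statement of the heavy tail f(t) ~ (B/(√2·|Γ(−α₂/2)|))·t^{−α₂/2−1} of the first-passage-time density, governed by the smaller exponent α₂.) -/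
open Real Filter Topology

noncomputable def Q12 (u r : ℝ) : ℝ :=
  (1 + r + u * (1 - r) ^ 2 / (√(4 + (u - u * r) ^ 2) + 2)) / 2

lemma Q12_eq (u r : ℝ) :
    √(((-2 + u * r + u) + √(4 + (u * r) ^ 2 + u ^ 2 - 2 * (u * r * u))) / 2)
      = √(u * Q12 u r) := by
  have e : 4 + (u * r) ^ 2 + u ^ 2 - 2 * (u * r * u) = 4 + (u - u * r) ^ 2 := by ring
  rw [e]
  congr 1
  unfold Q12
  have h : √(4 + (u - u * r) ^ 2) ^ 2 = 4 + (u - u * r) ^ 2 := Real.sq_sqrt (by positivity)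
  have h0 : 0 ≤ √(4 + (u - u * r) ^ 2) := Real.sqrt_nonneg _
  generalize √(4 + (u - u * r) ^ 2) = b at h h0 ⊢
  have h1 : b + 2 ≠ 0 := by positivity
  field_simp
  linear_combination h

lemma tend_rpow (a : ℝ) (ha : 0 < a) : Tendsto (fun s : ℝ => s ^ a) (𝓝[>] 0) (𝓝 0) := by
  have h := (Real.continuousAt_rpow_const 0 a (Or.inr ha.le)).tendsto
  rw [Real.zero_rpow ha.ne'] at h
  exact h.mono_left nhdsWithin_le_nhds

lemma g_tend : Tendsto (fun y : ℝ => (1 - Real.exp (-y)) / y) (𝓝[≠] 0) (𝓝 1) := by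
  have h : HasDerivAt (fun y : ℝ => 1 - Real.exp (-y)) 1 0 := by
    have := ((hasDerivAt_neg (0:ℝ)).exp).const_sub 1
    simpa using this
  have h2 := hasDerivAt_iff_tendsto_slope.1 h
  refine h2.congr fun y => ?_
  simp [slope_def_field]

/-- Laplace-domain heavy-tail statement for the first-passage-time density: for
`0 < α₂ < α₁ < 1` and `B > 0`, as `s → 0⁺`,
`1 − exp(−B √((a₀(s)+b₀(s))/2)) ~ (B/√2) s^{α₂/2}`, where `a₀(s) = −2 + s^{α₁} + s^{α₂}` and
`b₀(s) = √(4 + s^{2α₁} + s^{2α₂} − 2 s^{α₁+α₂})`. -/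
theorem stmt12 (α₁ α₂ B : ℝ) (hα₂0 : 0 < α₂) (hα : α₂ < α₁) (hα₁1 : α₁ < 1) (hB : 0 < B) :
    Tendsto
      (fun s : ℝ =>
        (1 - Real.exp (-B * Real.sqrt
              (((-2 + s ^ α₁ + s ^ α₂) +
                  Real.sqrt (4 + s ^ (2 * α₁) + s ^ (2 * α₂) - 2 * s ^ (α₁ + α₂))) / 2))) /
          (B / Real.sqrt 2 * s ^ (α₂ / 2)))
      (𝓝[>] 0) (𝓝 1) := by
  have hr : Tendsto (fun s : ℝ => s ^ (α₁ - α₂)) (𝓝[>] 0) (𝓝 0) := tend_rpow _ (by linarith)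
  have hu : Tendsto (fun s : ℝ => s ^ α₂) (𝓝[>] 0) (𝓝 0) := tend_rpow _ hα₂0
  have hw : Tendsto (fun s : ℝ => s ^ (α₂ / 2)) (𝓝[>] 0) (𝓝 0) := tend_rpow _ (by linarith)
  have hQ : Tendsto (fun s : ℝ => Q12 (s ^ α₂) (s ^ (α₁ - α₂))) (𝓝[>] 0) (𝓝 (1 / 2)) := by
    have hc : Continuous (fun p : ℝ × ℝ => Q12 p.1 p.2) := by
      unfold Q12
      refine Continuous.div_const (Continuous.add (by fun_prop)
        (Continuous.div (by fun_prop) (by fun_prop) ?_)) _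
      intro p
      positivity
    have h := (hc.tendsto (0, 0)).comp (hu.prodMk_nhds hr)
    have e : Q12 0 0 = 1 / 2 := by simp [Q12]
    simp only [e] at h
    exact h
  have hsq : Tendsto (fun s : ℝ => √(Q12 (s ^ α₂) (s ^ (α₁ - α₂)))) (𝓝[>] 0) (𝓝 √(1 / 2)) :=
    (Real.continuous_sqrt.tendsto _).comp hQ
  have hy : Tendsto (fun s : ℝ => B * (s ^ (α₂ / 2) * √(Q12 (s ^ α₂) (s ^ (α₁ - α₂)))))
      (𝓝[>] 0) (𝓝[≠] 0) := by
    rw [tendsto_nhdsWithin_iff]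
    refine ⟨?_, ?_⟩
    · have := (hw.mul hsq).const_mul B
      simpa using this
    · filter_upwards [self_mem_nhdsWithin, hQ.eventually (lt_mem_nhds (by norm_num : (0:ℝ) < 1/2))]
        with s hs hq
      have hs' : (0:ℝ) < s := hs
      have h1 := Real.sqrt_pos.2 hq
      have h2 : 0 < s ^ (α₂ / 2) := Real.rpow_pos_of_pos hs' _
      exact (by positivity : 0 < B * (s ^ (α₂ / 2) * √(Q12 (s ^ α₂) (s ^ (α₁ - α₂))))).ne'
  have hmain := (g_tend.comp hy).mul (hsq.const_mul √2)
  have e1 : (1:ℝ) * (√2 * √(1 / 2)) = 1 := by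
    rw [← Real.sqrt_mul (by norm_num)]; norm_num
  rw [e1] at hmain
  refine hmain.congr' ?_
  filter_upwards [self_mem_nhdsWithin, hQ.eventually (lt_mem_nhds (by norm_num : (0:ℝ) < 1/2))]
    with s hs hq
  have hs' : (0:ℝ) < s := hs
  have h1 := Real.sqrt_pos.2 hq
  have h2 : 0 < s ^ (α₂ / 2) := Real.rpow_pos_of_pos hs' _
  have ev : s ^ α₁ = s ^ α₂ * s ^ (α₁ - α₂) := by
    rw [← Real.rpow_add hs']; congr 1; ring
  have ew : √(s ^ α₂) = s ^ (α₂ / 2) := by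
    rw [Real.sqrt_eq_rpow, ← Real.rpow_mul hs'.le]; congr 1; ring
  have ea : s ^ (2 * α₁) = (s ^ α₁) ^ 2 := by
    rw [mul_comm, Real.rpow_mul hs'.le]; norm_cast
  have eb : s ^ (2 * α₂) = (s ^ α₂) ^ 2 := by
    rw [mul_comm, Real.rpow_mul hs'.le]; norm_cast
  have hX : √(((-2 + s ^ α₁ + s ^ α₂) +
        √(4 + s ^ (2 * α₁) + s ^ (2 * α₂) - 2 * s ^ (α₁ + α₂))) / 2)
      = s ^ (α₂ / 2) * √(Q12 (s ^ α₂) (s ^ (α₁ - α₂))) := by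
    rw [← ew, ← Real.sqrt_mul (Real.rpow_nonneg hs'.le _), ea, eb, Real.rpow_add hs', ev, Q12_eq]
  rw [hX]
  simp only [Function.comp, neg_mul]
  have h3 : (0:ℝ) < √2 := by positivity
  field_simp
end

section
/- Let 0 < α < 1 and a, b > 0. Then ∫₀¹ (sin(πα)/π)·a·b·(1−x)^{α−1}x^{α−1} / (b²x^{2α} + a²(1−x)^{2α} + 2ab·cos(απ)·x^α(1−x)^α) dx = 1; that is, the limiting occupation-fraction density of the paper is a probability density on (0,1). -/
open Real MeasureTheory

/-- The Lamperti-type limiting occupation-fraction density integrates to `1` on `(0,1)`: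
it is a probability density. -/
theorem stmt15 (α a b : ℝ) (hα0 : 0 < α) (hα1 : α < 1) (ha : 0 < a) (hb : 0 < b) :
    ∫ x in Set.Ioo (0 : ℝ) 1,
        Real.sin (π * α) / π * a * b * (1 - x) ^ (α - 1) * x ^ (α - 1) /
          (b ^ 2 * x ^ (2 * α) + a ^ 2 * (1 - x) ^ (2 * α) +
            2 * a * b * Real.cos (α * π) * x ^ α * (1 - x) ^ α) = 1 := by
  have hπ := Real.pi_pos
  rw [mul_comm α π]
  have hs : 0 < Real.sin (π * α) := Real.sin_pos_of_pos_of_lt_pi (by positivity) (by nlinarith)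
  have hsc : Real.sin (π * α) ^ 2 + Real.cos (π * α) ^ 2 = 1 := Real.sin_sq_add_cos_sq _
  set e : ℂ := Complex.cos ((π * α : ℝ) : ℂ) + Complex.sin ((π * α : ℝ) : ℂ) * Complex.I with he
  have hre : e.re = Real.cos (π * α) := by
    rw [he, ← Complex.ofReal_cos, ← Complex.ofReal_sin]; simp [-Complex.ofReal_cos, -Complex.ofReal_sin]
  have him : e.im = Real.sin (π * α) := by
    rw [he, ← Complex.ofReal_cos, ← Complex.ofReal_sin]; simp [-Complex.ofReal_cos, -Complex.ofReal_sin]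
  set s := Real.sin (π * α)
  set c := Real.cos (π * α)
  let z : ℝ → ℂ := fun x => ((a * (1 - x) ^ α : ℝ) : ℂ) + ((b * x ^ α : ℝ) : ℂ) * e
  have zre : ∀ x, (z x).re = a * (1 - x) ^ α + b * x ^ α * c := by
    intro x
    simp only [z, Complex.add_re, Complex.ofReal_re, Complex.re_ofReal_mul, hre]
  have zim : ∀ x, (z x).im = b * x ^ α * s := by
    intro x
    simp only [z, Complex.add_im, Complex.ofReal_im, Complex.im_ofReal_mul, him, zero_add]
  have zslit : ∀ x ∈ Set.Icc (0:ℝ) 1, z x ∈ Complex.slitPlane := by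
    intro x hx
    rcases hx.1.eq_or_lt with h | h
    · left; rw [zre, ← h, Real.zero_rpow hα0.ne']; simpa using ha
    · right; rw [zim]; positivity
  have zcont : Continuous z := by
    have h1 : Continuous fun x : ℝ => (1 - x) ^ α :=
      (continuous_const.sub continuous_id).rpow_const (fun _ => Or.inr hα0.le)
    have h2 : Continuous fun x : ℝ => x ^ α :=
      continuous_id.rpow_const (fun _ => Or.inr hα0.le)
    fun_prop
  let F : ℝ → ℝ := fun x => (1 / (π * α)) * (Complex.log (z x)).im
  have Fcont : ContinuousOn F (Set.Icc 0 1) := by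
    refine continuousOn_const.mul (Complex.continuous_im.comp_continuousOn ?_)
    exact zcont.continuousOn.clog zslit
  have Fder : ∀ x ∈ Set.Ioo (0:ℝ) 1, HasDerivAt F (s / π * a * b * (1 - x) ^ (α - 1) * x ^ (α - 1) /
          (b ^ 2 * x ^ (2 * α) + a ^ 2 * (1 - x) ^ (2 * α) +
            2 * a * b * c * x ^ α * (1 - x) ^ α)) x := by
    intro x ⟨hx0, hx1⟩
    have hy : 0 < 1 - x := by linarith
    have d1 : HasDerivAt (fun x : ℝ => a * (1 - x) ^ α) (a * (-1 * α * (1 - x) ^ (α - 1))) x :=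
      (((hasDerivAt_id x).const_sub 1).rpow_const (Or.inl hy.ne')).const_mul a
    have d2 : HasDerivAt (fun x : ℝ => b * x ^ α) (b * (α * x ^ (α - 1))) x :=
      (Real.hasDerivAt_rpow_const (Or.inl hx0.ne')).const_mul b
    have dz := d1.ofReal_comp.add (d2.ofReal_comp.mul_const e)
    have dl := HasDerivAt.clog_real dz (zslit x ⟨hx0.le, hx1.le⟩)
    have di := (Complex.imCLM.hasFDerivAt.comp_hasDerivAt x dl).const_mul (1 / (π * α))
    refine HasDerivAt.congr_deriv di ?_
    have hzx : (((fun x : ℝ => ((a * (1 - x) ^ α : ℝ) : ℂ)) + (fun x : ℝ => ((b * x ^ α : ℝ) : ℂ) * e)) x) = z x := rfl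
    rw [Complex.imCLM_apply, hzx, Complex.div_im, Complex.normSq_apply, zre, zim]
    simp only [Complex.add_im, Complex.add_re, Complex.ofReal_im, Complex.ofReal_re,
      Complex.im_ofReal_mul, Complex.re_ofReal_mul, hre, him]
    have e1 : x ^ α = x ^ (α - 1) * x := by
      rw [← Real.rpow_add_one hx0.ne']; ring_nf
    have e2 : (1 - x) ^ α = (1 - x) ^ (α - 1) * (1 - x) := by
      rw [← Real.rpow_add_one hy.ne']; ring_nf
    have e3 : x ^ (2 * α) = (x ^ α) ^ 2 := by
      rw [mul_comm, Real.rpow_mul hx0.le]; norm_cast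
    have e4 : (1 - x) ^ (2 * α) = ((1 - x) ^ α) ^ 2 := by
      rw [mul_comm, Real.rpow_mul hy.le]; norm_cast
    have hD : b ^ 2 * x ^ (2 * α) + a ^ 2 * (1 - x) ^ (2 * α) +
            2 * a * b * c * x ^ α * (1 - x) ^ α = (a * (1 - x) ^ α + b * x ^ α * c) * (a * (1 - x) ^ α + b * x ^ α * c) + b * x ^ α * s * (b * x ^ α * s) := by
      rw [e3, e4]; linear_combination (-(b * x ^ α) ^ 2) * hsc
    rw [hD]
    have hpos : 0 < (a * (1 - x) ^ α + b * x ^ α * c) * (a * (1 - x) ^ α + b * x ^ α * c) + b * x ^ α * s * (b * x ^ α * s) := by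
      have : 0 < b * x ^ α * s := by positivity
      nlinarith [mul_self_nonneg (a * (1 - x) ^ α + b * x ^ α * c)]
    rw [← sub_div, mul_div_assoc', div_left_inj' hpos.ne', e1, e2]
    field_simp
    ring
  have hnn : ∀ x ∈ Set.Ioo (0:ℝ) 1, 0 ≤ s / π * a * b * (1 - x) ^ (α - 1) * x ^ (α - 1) /
          (b ^ 2 * x ^ (2 * α) + a ^ 2 * (1 - x) ^ (2 * α) +
            2 * a * b * c * x ^ α * (1 - x) ^ α) := by
    intro x ⟨hx0, hx1⟩
    have hy : 0 < 1 - x := by linarith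
    have e3 : x ^ (2 * α) = (x ^ α) ^ 2 := by
      rw [mul_comm, Real.rpow_mul hx0.le]; norm_cast
    have e4 : (1 - x) ^ (2 * α) = ((1 - x) ^ α) ^ 2 := by
      rw [mul_comm, Real.rpow_mul hy.le]; norm_cast
    refine div_nonneg (by positivity) ?_
    have hD : b ^ 2 * x ^ (2 * α) + a ^ 2 * (1 - x) ^ (2 * α) +
            2 * a * b * c * x ^ α * (1 - x) ^ α = (a * (1 - x) ^ α + b * x ^ α * c) ^ 2 + (b * x ^ α * s) ^ 2 := by
      rw [e3, e4]; linear_combination (-(b * x ^ α) ^ 2) * hsc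
    rw [hD]; positivity
  have hint := intervalIntegral.integrableOn_deriv_of_nonneg Fcont Fder hnn
  have key := intervalIntegral.integral_eq_sub_of_hasDerivAt_of_le zero_le_one Fcont Fder
    ((intervalIntegrable_iff_integrableOn_Ioc_of_le zero_le_one).2 hint)
  rw [intervalIntegral.integral_of_le zero_le_one, integral_Ioc_eq_integral_Ioo] at key
  rw [key]
  have z0 : z 0 = (a : ℂ) := by simp [z, Real.zero_rpow hα0.ne']
  have z1 : z 1 = (b : ℂ) * e := by simp [z, Real.zero_rpow hα0.ne']
  have a1 : Complex.arg ((b : ℂ) * e) = π * α :=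
    Complex.arg_mul_cos_add_sin_mul_I hb ⟨by nlinarith, by nlinarith⟩
  simp only [F, z0, z1, Complex.log_im, a1, Complex.arg_ofReal_of_nonneg ha.le]
  field_simp
  simp
end
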